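/- Let β > 0. For all integers j ≥ 1, ℓ ≥ 1 and all 0 ≤ t₀ ≤ t, if j ≤ e^{-2βt-6}·ℓ, then Σ_{k=1}^{ℓ} I^k_{j+ℓ−k}(t₀) · I^{ℓ−k}_j(t−t₀) ≤ e^{2βt+7} · exp(−e^{-2βt−7}·ℓ). -/

import Mathlib

open MeasureTheory

/-- The nested integral `∫₀^t ∫₀^{s_ℓ} ⋯ ∫₀^{s_2} e^{-β(s_2+⋯+s_ℓ)} e^{a s_1} ds_1 ⋯ ds_ℓ`,
defined recursively in the number `ℓ` of integrations. -/
noncomputable def nestInt (β a : ℝ) : ℕ → ℝ → ℝ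
  | 0, _ => 1
  | 1, t => ∫ s in (0:ℝ)..t, Real.exp (a * s)
  | (n + 2), t => ∫ s in (0:ℝ)..t, Real.exp (-β * s) * nestInt β a (n + 1) s

/-- The iterated exponential integral
`I^ℓ_j(t) = β^ℓ ((j+ℓ-1)!/(j-1)!) e^{-βjt} ∫₀^t ∫₀^{s_ℓ} ⋯ ∫₀^{s_2}
e^{-β(s_2+⋯+s_ℓ)} e^{β(j+ℓ-1)s_1} ds_1 ⋯ ds_ℓ`, with `I^0_j(t) = 1`. -/
noncomputable def Iex (β : ℝ) (j ℓ : ℕ) (t : ℝ) : ℝ :=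
  if ℓ = 0 then 1
  else β ^ ℓ * ((Nat.factorial (j + ℓ - 1) : ℝ) / (Nat.factorial (j - 1) : ℝ)) *
    Real.exp (-(β * j * t)) * nestInt β (β * ((j : ℝ) + (ℓ : ℝ) - 1)) ℓ t

lemma nestInt_cont (β a : ℝ) : ∀ n, Continuous (nestInt β a n)
  | 0 => by
    have : nestInt β a 0 = fun _ => 1 := by funext t; simp [nestInt]
    rw [this]; exact continuous_const
  | 1 => by
    have : nestInt β a 1 = fun t => ∫ s in (0:ℝ)..t, Real.exp (a * s) := by
      funext t; simp only [nestInt]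
    rw [this]
    exact intervalIntegral.continuous_primitive
      (fun _ _ => Continuous.intervalIntegrable (by fun_prop) _ _) 0
  | (n + 2) => by
    have : nestInt β a (n + 2) =
        fun t => ∫ s in (0:ℝ)..t, Real.exp (-β * s) * nestInt β a (n + 1) s := by
      funext t; simp only [nestInt]
    rw [this]
    have h := nestInt_cont β a (n + 1)
    exact intervalIntegral.continuous_primitive
      (fun _ _ => Continuous.intervalIntegrable (by fun_prop) _ _) 0

lemma Iex_cont (β : ℝ) (j n : ℕ) : Continuous (Iex β j n) := by
  unfold Iex
  have := nestInt_cont β (β * ((j : ℝ) + (n : ℝ) - 1)) n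
  split_ifs <;> fun_prop

lemma Iex_succ (β : ℝ) (j n : ℕ) (hj : 1 ≤ j) (t : ℝ) :
    Iex β j (n + 1) t = β * j * Real.exp (-(β * j * t)) *
      ∫ s in (0:ℝ)..t, Real.exp (β * j * s) * Iex β (j + 1) n s := by
  obtain ⟨i, rfl⟩ : ∃ i, j = i + 1 := ⟨j - 1, by omega⟩
  rcases n with _ | n
  · simp only [Iex, nestInt]
    have : (β * (((i + 1 : ℕ) : ℝ) + ((0 + 1 : ℕ) : ℝ) - 1)) = β * ((i + 1 : ℕ) : ℝ) := by
      push_cast; ring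
    rw [this]
    have hf : (i.factorial : ℝ) ≠ 0 := by positivity
    simp [Nat.factorial_succ]
    field_simp
    simp
  · have e : ∀ s, Real.exp (β * (i + 1 : ℕ) * s) * Iex β (i + 1 + 1) (n + 1) s =
        (β ^ (n + 1) * ((Nat.factorial (i + 1 + n + 1) : ℝ) / (Nat.factorial (i + 1) : ℝ))) *
          (Real.exp (-β * s) * nestInt β (β * (((i + 1 : ℕ) : ℝ) + ((n + 1 + 1 : ℕ) : ℝ) - 1))
            (n + 1) s) := by
      intro s
      have h1 : (β * (((i + 1 + 1 : ℕ) : ℝ) + ((n + 1 : ℕ) : ℝ) - 1)) =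
        (β * (((i + 1 : ℕ) : ℝ) + ((n + 1 + 1 : ℕ) : ℝ) - 1)) := by push_cast; ring
      have h2 : Real.exp (-β * s) = Real.exp (β * (i + 1 : ℕ) * s) *
          Real.exp (-(β * (i + 1 + 1 : ℕ) * s)) := by
        rw [← Real.exp_add]; congr 1; push_cast; ring
      simp only [Iex, h1]
      rw [if_neg (by omega), h2]
      have h3 : i + 1 + 1 + (n + 1) - 1 = i + 1 + n + 1 := by omega
      have h4 : i + 1 + 1 - 1 = i + 1 := by omega
      rw [h3, h4]; ring
    simp_rw [e]
    rw [intervalIntegral.integral_const_mul]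
    simp only [Iex]
    rw [if_neg (by omega)]
    have h3 : i + 1 + (n + 1 + 1) - 1 = i + 1 + n + 1 := by omega
    have h4 : i + 1 - 1 = i := by omega
    rw [h3, h4]
    have h5 : ((i + 1).factorial : ℝ) = (i + 1) * i.factorial := by
      rw [Nat.factorial_succ]; push_cast; ring
    have hf : (i.factorial : ℝ) ≠ 0 := by positivity
    have hi : (i + 1 : ℝ) ≠ 0 := by positivity
    rw [h5]
    simp only [nestInt]
    push_cast
    field_simp
    ring

lemma Iex_nonneg (β : ℝ) (hβ : 0 < β) (n : ℕ) : ∀ (j : ℕ), 1 ≤ j → ∀ t, 0 ≤ t →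
    0 ≤ Iex β j n t := by
  induction n with
  | zero => intro j _ t _; simp [Iex]
  | succ n ih =>
    intro j hj t ht
    rw [Iex_succ β j n hj]
    have : 0 ≤ ∫ s in (0:ℝ)..t, Real.exp (β * j * s) * Iex β (j + 1) n s := by
      apply intervalIntegral.integral_nonneg ht
      intro s hs
      exact mul_nonneg (Real.exp_pos _).le (ih (j + 1) (by omega) s hs.1)
    positivity

/-- Chernoff-type bound. -/
lemma Iex_le (β : ℝ) (hβ : 0 < β) (r : ℝ) (hr : 0 ≤ r) (n : ℕ) : ∀ (j : ℕ), 1 ≤ j →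
    ∀ t, 0 ≤ t → r * Real.exp (β * t) < 1 →
    Iex β j n t ≤ (1 - r) ^ n * ((1 - r) / (1 - r * Real.exp (β * t))) ^ j := by
  induction n with
  | zero =>
    intro j hj t ht hrt
    have h1 : 1 ≤ Real.exp (β * t) := Real.one_le_exp (by positivity)
    simp only [Iex, if_true, pow_zero, one_mul]
    apply one_le_pow₀
    rw [one_le_div (by linarith)]
    nlinarith
  | succ n ih =>
    intro j hj t ht hrt
    have hE : ∀ s ∈ Set.Icc 0 t, r * Real.exp (β * s) < 1 := by
      intro s hs
      refine lt_of_le_of_lt ?_ hrt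
      have := hs.2
      gcongr
    have hr1 : r < 1 := by simpa using hE 0 ⟨le_rfl, ht⟩
    rw [Iex_succ β j n hj]
    have hder : ∀ s ∈ Set.uIcc 0 t, HasDerivAt
        (fun s => (1 - r) ^ (n + 1) * ((1 - r) * Real.exp (β * s) / (1 - r * Real.exp (β * s))) ^ j)
        (β * j * (Real.exp (β * j * s) *
          ((1 - r) ^ n * ((1 - r) / (1 - r * Real.exp (β * s))) ^ (j + 1)))) s := by
      intro s hs
      rw [Set.uIcc_of_le ht] at hs
      have h0 : 1 - r * Real.exp (β * s) ≠ 0 := by linarith [hE s hs]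
      have he : HasDerivAt (fun s => Real.exp (β * s)) (Real.exp (β * s) * β) s := by
        simpa using ((hasDerivAt_id s).const_mul β).exp
      have hd := ((((he.const_mul (1 - r)).div ((he.const_mul r).const_sub 1) h0).pow j).const_mul
        ((1 - r) ^ (n + 1)))
      refine hd.congr_deriv ?_
      obtain ⟨i, rfl⟩ : ∃ i, j = i + 1 := ⟨j - 1, by omega⟩
      have hx : Real.exp (β * (i + 1 : ℕ) * s) = Real.exp (β * s) ^ (i + 1) := by
        rw [← Real.exp_nat_mul]; congr 1; ring
      rw [hx]
      simp only [Nat.add_sub_cancel, Pi.div_apply, div_pow, mul_pow]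
      field_simp
      ring
    have hcont : ContinuousOn (fun s => (β * j * (Real.exp (β * j * s) *
          ((1 - r) ^ n * ((1 - r) / (1 - r * Real.exp (β * s))) ^ (j + 1))))) (Set.uIcc 0 t) := by
      have : ∀ s ∈ Set.uIcc 0 t, 1 - r * Real.exp (β * s) ≠ 0 := by
        intro s hs
        rw [Set.uIcc_of_le ht] at hs
        linarith [hE s hs]
      fun_prop (disch := assumption)
    have hint := intervalIntegral.integral_eq_sub_of_hasDerivAt hder hcont.intervalIntegrable
    have hmono : ∫ s in (0:ℝ)..t, β * j * (Real.exp (β * j * s) * Iex β (j + 1) n s) ≤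
        ∫ s in (0:ℝ)..t, (β * j * (Real.exp (β * j * s) *
          ((1 - r) ^ n * ((1 - r) / (1 - r * Real.exp (β * s))) ^ (j + 1)))) := by
      have hc := Iex_cont β (j + 1) n
      apply intervalIntegral.integral_mono_on ht
        (Continuous.intervalIntegrable (by fun_prop) _ _) hcont.intervalIntegrable
      intro s hs
      have := ih (j + 1) (by omega) s hs.1 (hE s hs)
      gcongr
    rw [hint, intervalIntegral.integral_const_mul] at hmono
    have hx : Real.exp (β * j * t) = Real.exp (β * t) ^ j := by
      rw [← Real.exp_nat_mul]; congr 1; ring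
    have h00 : 0 ≤ (1 - r) ^ (n + 1) *
        ((1 - r) * Real.exp (β * 0) / (1 - r * Real.exp (β * 0))) ^ j := by
      have : 0 < 1 - r := by linarith
      simp only [mul_zero, Real.exp_zero, mul_one]
      positivity
    calc β * j * Real.exp (-(β * j * t)) *
        ∫ s in (0:ℝ)..t, Real.exp (β * j * s) * Iex β (j + 1) n s
        = Real.exp (-(β * j * t)) * (β * j *
        ∫ s in (0:ℝ)..t, Real.exp (β * j * s) * Iex β (j + 1) n s) := by ring
      _ ≤ Real.exp (-(β * j * t)) * ((1 - r) ^ (n + 1) *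
          ((1 - r) * Real.exp (β * t) / (1 - r * Real.exp (β * t))) ^ j) := by
        exact mul_le_mul_of_nonneg_left (by linarith) (Real.exp_pos _).le
      _ = _ := by
        rw [Real.exp_neg, hx]
        have : Real.exp (β * t) ≠ 0 := (Real.exp_pos _).ne'
        have h0 : 1 - r * Real.exp (β * t) ≠ 0 := by linarith
        simp only [div_pow, mul_pow]
        field_simp

/-- If `j ≤ e^{-2βt-6}ℓ` and `0 ≤ t₀ ≤ t`, then
`Σ_{k=1}^{ℓ} I^k_{j+ℓ−k}(t₀) I^{ℓ−k}_j(t−t₀) ≤ e^{2βt+7} exp(−e^{-2βt−7}ℓ)`. -/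
theorem Iex_convolution_bound (β : ℝ) (hβ : 0 < β) (j ℓ : ℕ) (hj : 1 ≤ j) (hℓ : 1 ≤ ℓ)
    (t₀ t : ℝ) (ht₀ : 0 ≤ t₀) (ht : t₀ ≤ t)
    (hjl : (j : ℝ) ≤ Real.exp (-(2 * β * t) - 6) * (ℓ : ℝ)) :
    ∑ k ∈ Finset.Icc 1 ℓ, Iex β (j + ℓ - k) k t₀ * Iex β j (ℓ - k) (t - t₀)
      ≤ Real.exp (2 * β * t + 7) * Real.exp (-(Real.exp (-(2 * β * t) - 7) * (ℓ : ℝ))) := by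
  have hT : 0 ≤ t := ht₀.trans ht
  set E := Real.exp (β * t) with hEdef
  have hE1 : 1 ≤ E := Real.one_le_exp (by positivity)
  have hE0 : 0 < E := by linarith
  set r : ℝ := 1 / (2 * E) with hrdef
  have hr : 0 ≤ r := by positivity
  have hrE : r * E = 1 / 2 := by rw [hrdef]; field_simp
  have hr2 : r ≤ 1 / 2 := by nlinarith
  set F := Real.exp (β * t₀) with hFdef
  have hF1 : 1 ≤ F := Real.one_le_exp (by positivity)
  have hFE : F ≤ E := Real.exp_le_exp.2 (by gcongr)
  have hrF : r * F ≤ 1 / 2 := by nlinarith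
  have hFE' : F * Real.exp (β * (t - t₀)) = E := by
    rw [hFdef, hEdef, ← Real.exp_add]; congr 1; ring
  have hterm : ∀ k ∈ Finset.Icc 1 ℓ, Iex β (j + ℓ - k) k t₀ * Iex β j (ℓ - k) (t - t₀) ≤
      (1 - r) ^ (ℓ + j) * 2 ^ j := by
    intro k hk
    rw [Finset.mem_Icc] at hk
    obtain ⟨m, rfl⟩ : ∃ m, ℓ = m + k := ⟨ℓ - k, by omega⟩
    have e1 : j + (m + k) - k = j + m := by omega
    have e2 : m + k - k = m := by omega
    rw [e1, e2]
    have b1 := Iex_le β hβ r hr k (j + m) (by omega) t₀ ht₀ (by rw [← hFdef]; linarith)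
    have b2 := Iex_le β hβ (r * F) (by positivity) m j hj (t - t₀) (by linarith)
      (by rw [mul_assoc, hFE', hrE]; norm_num)
    rw [mul_assoc r F, hFE', hrE] at b2
    rw [← hFdef] at b1
    have p1 : 0 < 1 - r := by linarith
    have p2 : 0 < 1 - r * F := by linarith
    calc _ ≤ ((1 - r) ^ k * ((1 - r) / (1 - r * F)) ^ (j + m)) *
          ((1 - r * F) ^ m * ((1 - r * F) / (1 - 1 / 2)) ^ j) := by
          apply mul_le_mul b1 b2 (Iex_nonneg β hβ m j hj _ (by linarith))
          positivity
      _ = _ := by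
          have : (1 - 1 / 2 : ℝ) = 2⁻¹ := by norm_num
          rw [this, div_inv_eq_mul]
          simp only [div_pow, mul_pow, pow_add]
          field_simp
  have hsum := Finset.sum_le_card_nsmul _ _ _ hterm
  refine hsum.trans ?_
  simp only [Nat.card_Icc, Nat.add_sub_cancel, nsmul_eq_mul]
  have hL : (0:ℝ) < ℓ := by exact_mod_cast hℓ
  -- exponential constants
  have x2 : Real.exp (2 * β * t + 7) = E ^ 2 * Real.exp 7 := by
    rw [Real.exp_add, hEdef, ← Real.exp_nat_mul]; congr 2; push_cast; ring
  have x3 : ∀ c : ℝ, Real.exp (-(2 * β * t) - c) = (E ^ 2)⁻¹ * (Real.exp c)⁻¹ := by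
    intro c
    rw [sub_eq_add_neg, Real.exp_add, Real.exp_neg, Real.exp_neg, hEdef, ← Real.exp_nat_mul]
    congr 3; push_cast; ring
  rw [x3] at hjl
  rw [x2, x3]
  have e8 : ∀ c : ℝ, 6 ≤ c → (8:ℝ) ≤ Real.exp c := by
    intro c hc
    have h1 : (2:ℝ) ≤ Real.exp 1 := by linarith [Real.add_one_le_exp (1:ℝ)]
    have h2 : Real.exp 3 = Real.exp 1 ^ 3 := by rw [← Real.exp_nat_mul]; norm_num
    have h3 : (2:ℝ) ^ 3 ≤ Real.exp 1 ^ 3 := by gcongr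
    have h4 : Real.exp 3 ≤ Real.exp c := Real.exp_le_exp.2 (by linarith)
    linarith
  have small : ∀ c : ℝ, 6 ≤ c → (E ^ 2)⁻¹ * (Real.exp c)⁻¹ * ℓ ≤ ℓ / (8 * E) := by
    intro c hc
    have := e8 c hc
    have h : (E ^ 2)⁻¹ * (Real.exp c)⁻¹ ≤ E⁻¹ * 8⁻¹ := by
      have : E ≤ E ^ 2 := by nlinarith
      gcongr
    calc _ ≤ E⁻¹ * 8⁻¹ * ℓ := by gcongr
      _ = _ := by field_simp
  have s6 := small 6 le_rfl
  have s7 := small 7 (by norm_num)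
  have y1 : (1 - r) ^ (ℓ + j) ≤ Real.exp (-(ℓ / (2 * E))) := by
    calc (1 - r) ^ (ℓ + j) ≤ (1 - r) ^ ℓ :=
          pow_le_pow_of_le_one (by linarith) (by linarith) (by omega)
      _ ≤ (Real.exp (-r)) ^ ℓ := by
          apply pow_le_pow_left₀ (by linarith)
          linarith [Real.add_one_le_exp (-r)]
      _ = _ := by
          rw [← Real.exp_nat_mul]; congr 1; rw [hrdef]; ring
  have y2 : (2:ℝ) ^ j ≤ Real.exp (ℓ / (8 * E)) := by
    calc (2:ℝ) ^ j ≤ (Real.exp 1) ^ j := by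
          gcongr; linarith [Real.add_one_le_exp (1:ℝ)]
      _ = Real.exp j := by rw [← Real.exp_nat_mul]; simp
      _ ≤ _ := Real.exp_le_exp.2 (by linarith)
  have y3 : (ℓ : ℝ) ≤ E ^ 2 * Real.exp 7 * Real.exp (ℓ / (4 * E)) := by
    have h1 : (ℓ : ℝ) / (4 * E) ≤ Real.exp (ℓ / (4 * E)) := by
      linarith [Real.add_one_le_exp ((ℓ : ℝ) / (4 * E))]
    have h2 : 4 * E ≤ E ^ 2 * Real.exp 7 := by
      have := e8 7 (by norm_num)
      nlinarith
    calc (ℓ : ℝ) = (4 * E) * (ℓ / (4 * E)) := by field_simp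
      _ ≤ _ := by gcongr
  calc (ℓ : ℝ) * ((1 - r) ^ (ℓ + j) * 2 ^ j)
      ≤ (E ^ 2 * Real.exp 7 * Real.exp (ℓ / (4 * E))) *
        (Real.exp (-(ℓ / (2 * E))) * Real.exp (ℓ / (8 * E))) := by
        have p1 : 0 < 1 - r := by linarith
        gcongr
    _ = E ^ 2 * Real.exp 7 * Real.exp (-(ℓ / (8 * E))) := by
        rw [mul_assoc, ← Real.exp_add, ← Real.exp_add]
        congr 2; field_simp; ring
    _ ≤ _ := by gcongr
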